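/- Restricted-data 1-bit MinHash bounds: let W1, W2 be nonempty finite sets with cosine similarity S and resemblance R, suppose z ≤ z* where z = √(|W2|/|W1|) + √(|W1|/|W2|) and z* ≥ 2, and set P = (R + 1)/2. Then for S0 ∈ (0,1] and c ∈ (0,1): if S ≥ S0 then P ≥ z*/(2(z* − S0)), and if S ≤ cS0 then P ≤ 1/(2 − cS0). -/

import Mathlib

/-! Dividing inclusion–exclusion by `√(f1 f2)` gives `z - S = |W1 ∪ W2| / √(f1 f2)`, so that
`P = z / (2 (z - S))`. This expression grows with `S` and shrinks with `z`: the lower bound is its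
value at `(z*, S0)`, and the upper bound is its value at `(2, c S0)`, since `2 ≤ z` by AM-GM. -/

/-- The cosine similarity `S` of two finite sets, i.e. the cosine of the angle between their
indicator vectors. It takes the junk value `0` when one of the sets is empty. -/
noncomputable def cosineSimilarity {α : Type*} [DecidableEq α] (A B : Finset α) : ℝ :=
  ((A ∩ B).card : ℝ) / √((A.card : ℝ) * (B.card : ℝ))

/-- The resemblance (Jaccard index) `R` of two finite sets, with junk value `0` when both are
empty. -/
noncomputable def resemblance {α : Type*} [DecidableEq α] (A B : Finset α) : ℝ :=
  ((A ∩ B).card : ℝ) / ((A ∪ B).card : ℝ)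

/-- The quantity `z`, which measures how unbalanced the sizes of two finite nonempty sets are; its
least value `2` is attained by sets of equal size. -/
noncomputable def sizeImbalance {α : Type*} (A B : Finset α) : ℝ :=
  √((B.card : ℝ) / (A.card : ℝ)) + √((A.card : ℝ) / (B.card : ℝ))

/-- The collision probability `P` of 1-bit minwise hashing in the sparse-data limit, where two
distinct minima share their lowest bit with probability `1 / 2`. -/
noncomputable def oneBitCollisionProb {α : Type*} [DecidableEq α] (A B : Finset α) : ℝ :=
  (resemblance A B + 1) / 2

theorem div_two_mul_sub_le_div_two_mul_sub {K : Type*} [Field K] [LinearOrder K]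
    [IsStrictOrderedRing K] {z₁ z₂ s₁ s₂ : K} (hz : z₂ ≤ z₁) (hs : s₁ ≤ s₂) (hs₂ : 0 ≤ s₂)
    (hsz : s₂ < z₂) : z₁ / (2 * (z₁ - s₁)) ≤ z₂ / (2 * (z₂ - s₂)) := by
  have hcross : z₂ * s₁ ≤ z₁ * s₂ :=
    calc z₂ * s₁ ≤ z₂ * s₂ := mul_le_mul_of_nonneg_left hs (hs₂.trans hsz.le)
      _ ≤ z₁ * s₂ := mul_le_mul_of_nonneg_right hz hs₂
  rw [div_le_div_iff₀ (by linarith) (by linarith)]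
  linarith

theorem sqrt_div_add_sqrt_div {x y : ℝ} (hx : 0 < x) (hy : 0 < y) :
    √(y / x) + √(x / y) = (x + y) / √(x * y) := by
  have hx' : 0 < √x := Real.sqrt_pos.2 hx
  have hy' : 0 < √y := Real.sqrt_pos.2 hy
  rw [Real.sqrt_div hy.le, Real.sqrt_div hx.le, Real.sqrt_mul hx.le,
    div_add_div _ _ hx'.ne' hy'.ne', Real.mul_self_sqrt hx.le, Real.mul_self_sqrt hy.le, add_comm]

theorem two_le_sqrt_div_add_sqrt_div {x y : ℝ} (hx : 0 < x) (hy : 0 < y) :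
    2 ≤ √(y / x) + √(x / y) := by
  rw [sqrt_div_add_sqrt_div hx hy, le_div_iff₀ (Real.sqrt_pos.2 (mul_pos hx hy)),
    Real.sqrt_mul hx.le, ← mul_assoc]
  simpa only [Real.sq_sqrt hx.le, Real.sq_sqrt hy.le] using two_mul_le_add_sq √x √y

section FinsetSimilarity

variable {α : Type*} {A B : Finset α}

theorem two_le_sizeImbalance (hA : A.Nonempty) (hB : B.Nonempty) : 2 ≤ sizeImbalance A B :=
  two_le_sqrt_div_add_sqrt_div (Nat.cast_pos.2 hA.card_pos) (Nat.cast_pos.2 hB.card_pos)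

variable [DecidableEq α]

theorem cosineSimilarity_nonneg (A B : Finset α) : 0 ≤ cosineSimilarity A B := by
  unfold cosineSimilarity
  positivity

theorem sizeImbalance_sub_cosineSimilarity (hA : A.Nonempty) (hB : B.Nonempty) :
    sizeImbalance A B - cosineSimilarity A B =
      ((A ∪ B).card : ℝ) / √((A.card : ℝ) * (B.card : ℝ)) := by
  have hcard : ((A ∪ B).card : ℝ) + (A ∩ B).card = A.card + B.card :=
    mod_cast Finset.card_union_add_card_inter A B
  rw [sizeImbalance, cosineSimilarity,
    sqrt_div_add_sqrt_div (Nat.cast_pos.2 hA.card_pos) (Nat.cast_pos.2 hB.card_pos),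
    ← sub_div, ← hcard, add_sub_cancel_right]

theorem cosineSimilarity_lt_sizeImbalance (hA : A.Nonempty) (hB : B.Nonempty) :
    cosineSimilarity A B < sizeImbalance A B := by
  have hAB : (A ∪ B).Nonempty := hA.mono Finset.subset_union_left
  rw [← sub_pos, sizeImbalance_sub_cosineSimilarity hA hB]
  positivity

theorem resemblance_eq_cosineSimilarity_div (hA : A.Nonempty) (hB : B.Nonempty) :
    resemblance A B = cosineSimilarity A B / (sizeImbalance A B - cosineSimilarity A B) := by
  have hsqrt : √((A.card : ℝ) * (B.card : ℝ)) ≠ 0 := by positivity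
  rw [sizeImbalance_sub_cosineSimilarity hA hB, cosineSimilarity, resemblance,
    div_div_div_cancel_right₀ hsqrt]

theorem oneBitCollisionProb_eq_sizeImbalance_div (hA : A.Nonempty) (hB : B.Nonempty) :
    oneBitCollisionProb A B =
      sizeImbalance A B / (2 * (sizeImbalance A B - cosineSimilarity A B)) := by
  have hne : sizeImbalance A B - cosineSimilarity A B ≠ 0 :=
    (sub_pos.2 (cosineSimilarity_lt_sizeImbalance hA hB)).ne'
  rw [oneBitCollisionProb, resemblance_eq_cosineSimilarity_div hA hB, div_add_one hne,
    add_sub_cancel, div_div, mul_comm]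

theorem restricted_one_bit_minhash_bounds_general (hA : A.Nonempty) (hB : B.Nonempty)
    {zstar s t : ℝ} (hz : sizeImbalance A B ≤ zstar) (ht : t < 2) :
    (s ≤ cosineSimilarity A B → zstar / (2 * (zstar - s)) ≤ oneBitCollisionProb A B) ∧
      (cosineSimilarity A B ≤ t → oneBitCollisionProb A B ≤ 1 / (2 - t)) := by
  have hS : 0 ≤ cosineSimilarity A B := cosineSimilarity_nonneg A B
  rw [oneBitCollisionProb_eq_sizeImbalance_div hA hB]
  constructor
  · intro hs
    exact div_two_mul_sub_le_div_two_mul_sub hz hs hS (cosineSimilarity_lt_sizeImbalance hA hB)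
  · intro hSt
    calc sizeImbalance A B / (2 * (sizeImbalance A B - cosineSimilarity A B))
      _ ≤ 2 / (2 * (2 - t)) :=
        div_two_mul_sub_le_div_two_mul_sub (two_le_sizeImbalance hA hB) hSt (hS.trans hSt) ht
      _ = 1 / (2 - t) := by rw [div_mul_cancel_left₀ two_ne_zero, one_div]

end FinsetSimilarity

/-- Restricted-data 1-bit MinHash bounds: if `z = √(f2/f1) + √(f1/f2) ≤ z*` with `z* ≥ 2`
and `P = (R + 1)/2`, then `S ≥ S0` implies `P ≥ z*/(2(z* - S0))` and `S ≤ c·S0` implies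
`P ≤ 1/(2 - c·S0)`. -/
theorem restricted_one_bit_minhash_bounds (W1 W2 : Finset ℕ)
    (h1 : W1.Nonempty) (h2 : W2.Nonempty)
    (zstar : ℝ) (hzstar : 2 ≤ zstar)
    (hz : Real.sqrt ((W2.card : ℝ) / (W1.card : ℝ)) +
        Real.sqrt ((W1.card : ℝ) / (W2.card : ℝ)) ≤ zstar)
    (S0 c : ℝ) (hS0 : 0 < S0) (hS0' : S0 ≤ 1) (hc : 0 < c) (hc' : c < 1) :
    (S0 ≤ ((W1 ∩ W2).card : ℝ) / Real.sqrt ((W1.card : ℝ) * (W2.card : ℝ)) →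
        zstar / (2 * (zstar - S0)) ≤
          (((W1 ∩ W2).card : ℝ) / ((W1 ∪ W2).card : ℝ) + 1) / 2) ∧
      (((W1 ∩ W2).card : ℝ) / Real.sqrt ((W1.card : ℝ) * (W2.card : ℝ)) ≤ c * S0 →
        (((W1 ∩ W2).card : ℝ) / ((W1 ∪ W2).card : ℝ) + 1) / 2 ≤ 1 / (2 - c * S0)) :=
  have hcS0 : c * S0 < 1 := mul_lt_one_of_nonneg_of_lt_one_left hc.le hc' hS0'
  restricted_one_bit_minhash_bounds_general h1 h2 hz (hcS0.trans one_lt_two)
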